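/- Any short exact sequence 0 → M/2M → N/2N → L/2L → 0 of ℤ/2ℤ-vector spaces, where M, N, L are finitely generated free ℤ-modules and the maps are induced modulo 2 by some ℤ-linear data, can be lifted to a short exact sequence 0 → M → N → L → 0 of ℤ-modules. More precisely: given finitely generated free ℤ-modules M, N, L and a short exact sequence 0 → M/2M → N/2N → L/2L → 0 of ℤ/2ℤ-vector spaces, there exist ℤ-linear maps α : M → N and β : N → L whose reductions modulo 2 are the given maps and such that 0 → M → N → L → 0 is exact. -/

import Mathlib

/-- The submodule `2M` of a `ℤ`-module `M`. -/
def twoSMul (M : Type*) [AddCommGroup M] [Module ℤ M] : Submodule ℤ M :=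
  Submodule.map ((2 : ℤ) • (LinearMap.id : M →ₗ[ℤ] M)) ⊤

theorem mem_twoSMul' {M : Type*} [AddCommGroup M] [Module ℤ M] {x : M} :
    x ∈ twoSMul M ↔ ∃ y : M, x = (2 : ℤ) • y := by
  simp only [twoSMul, Submodule.mem_map, Submodule.mem_top, true_and]
  exact exists_congr fun y => eq_comm

theorem lift_equiv_aux {P N : Type*} [AddCommGroup P] [Module.Free ℤ P]
    [Module.Finite ℤ P] [AddCommGroup N] [Module.Free ℤ N] [Module.Finite ℤ N]
    (F : P →ₗ[ℤ] N) (h1 : ∀ x, F x ∈ twoSMul N → x ∈ twoSMul P)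
    (h2 : ∀ n, ∃ x, n - F x ∈ twoSMul N) :
    ∃ e : P ≃ₗ[ℤ] N, ∀ x, e x - F x ∈ twoSMul N := by
  have hinj : Function.Injective F := by
    rw [← LinearMap.ker_eq_bot]
    have hle : LinearMap.ker F ≤ (Ideal.span {(2 : ℤ)}) • LinearMap.ker F := by
      intro x hx
      obtain ⟨y, rfl⟩ := mem_twoSMul'.1 (h1 x (by rw [LinearMap.mem_ker.1 hx]; exact zero_mem _))
      refine Submodule.smul_mem_smul (Ideal.mem_span_singleton_self 2) ?_
      rw [LinearMap.mem_ker, map_smul] at hx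
      exact (smul_eq_zero.1 hx).resolve_left (show (2 : ℤ) ≠ 0 by norm_num)
    obtain ⟨r, hr, hr2⟩ := Submodule.exists_sub_one_mem_and_smul_eq_zero_of_fg_of_le_smul
      _ _ (IsNoetherian.noetherian _) hle
    rw [Submodule.eq_bot_iff]
    intro x hx
    refine (smul_eq_zero.1 (hr2 x hx)).resolve_left ?_
    rintro rfl
    rw [Ideal.mem_span_singleton] at hr
    omega
  obtain ⟨r, S⟩ := Submodule.smithNormalForm (Module.Free.chooseBasis ℤ N) (LinearMap.range F)
  obtain ⟨bM, bN, f, a, snf⟩ := S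
  let p := bN.map (LinearEquiv.ofInjective F hinj).symm
  have hp : ∀ i, F (p i) = a i • bM (f i) := by
    intro i
    rw [← snf]
    have := LinearEquiv.apply_symm_apply (LinearEquiv.ofInjective F hinj) (bN i)
    exact congrArg Subtype.val this
  have hodd : ∀ i, ¬ (2 : ℤ) ∣ a i := by
    rintro i ⟨c, hc⟩
    obtain ⟨y, hy⟩ := mem_twoSMul'.1 (h1 (p i) (mem_twoSMul'.2
      ⟨c • bM (f i), by rw [hp, hc, mul_smul]⟩))
    have := congrArg (fun z => p.repr z i) hy
    simp at this
    omega
  have hsurj : Function.Surjective f := by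
    intro j
    by_contra hj
    push Not at hj
    obtain ⟨x, hx⟩ := h2 (bM j)
    obtain ⟨y, hy⟩ := mem_twoSMul'.1 hx
    have hz : bM.coord j ∘ₗ F = 0 := by
      refine p.ext fun i => ?_
      simp [hp, hj i]
    have hz' := LinearMap.congr_fun hz x
    have := congrArg (bM.coord j) hy
    rw [map_sub, map_smul] at this
    simp at this hz'
    omega
  let σ := Equiv.ofBijective f ⟨f.injective, hsurj⟩
  let e := p.equiv bM σ
  refine ⟨e, fun x => ?_⟩
  have hc : (twoSMul N).mkQ ∘ₗ e.toLinearMap = (twoSMul N).mkQ ∘ₗ F := by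
    refine p.ext fun i => ?_
    have : e (p i) = bM (f i) := by
      rw [Module.Basis.equiv_apply]; rfl
    simp only [LinearMap.comp_apply, LinearEquiv.coe_coe, this, hp, Submodule.mkQ_apply]
    rw [Submodule.Quotient.eq]
    obtain ⟨k, hk⟩ : (2 : ℤ) ∣ 1 - a i := by have := hodd i; omega
    refine mem_twoSMul'.2 ⟨k • bM (f i), ?_⟩
    rw [← mul_smul, ← hk, sub_smul, one_smul]
  exact (Submodule.Quotient.eq _).1 (LinearMap.congr_fun hc x)

/-- Any short exact sequence `0 → M/2M → N/2N → L/2L → 0` of `ℤ/2ℤ`-vector spaces, with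
`M, N, L` finitely generated free `ℤ`-modules, can be lifted to a short exact sequence
`0 → M → N → L → 0` of `ℤ`-modules, the liftings inducing the given maps modulo 2. -/
theorem lift_exact_sequence_mod_two
    (M N L : Type*) [AddCommGroup M] [Module ℤ M] [Module.Free ℤ M] [Module.Finite ℤ M]
    [AddCommGroup N] [Module ℤ N] [Module.Free ℤ N] [Module.Finite ℤ N]
    [AddCommGroup L] [Module ℤ L] [Module.Free ℤ L] [Module.Finite ℤ L]
    (abar : (M ⧸ twoSMul M) →ₗ[ℤ] (N ⧸ twoSMul N))
    (bbar : (N ⧸ twoSMul N) →ₗ[ℤ] (L ⧸ twoSMul L))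
    (hinj : Function.Injective abar) (hsurj : Function.Surjective bbar)
    (hex : LinearMap.range abar = LinearMap.ker bbar) :
    ∃ (α : M →ₗ[ℤ] N) (β : N →ₗ[ℤ] L)
      (hα : twoSMul M ≤ Submodule.comap α (twoSMul N))
      (hβ : twoSMul N ≤ Submodule.comap β (twoSMul L)),
      Submodule.mapQ _ _ α hα = abar ∧
      Submodule.mapQ _ _ β hβ = bbar ∧
      Function.Injective α ∧ Function.Surjective β ∧
      LinearMap.range α = LinearMap.ker β := by
  rename_i iM _ _ _ iN _ _ _ iL _ _
  obtain rfl : iM = AddCommGroup.toIntModule M := Subsingleton.elim _ _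
  obtain rfl : iN = AddCommGroup.toIntModule N := Subsingleton.elim _ _
  obtain rfl : iL = AddCommGroup.toIntModule L := Subsingleton.elim _ _
  obtain ⟨A, hA⟩ := Module.projective_lifting_property (twoSMul N).mkQ (abar ∘ₗ (twoSMul M).mkQ)
    (Submodule.mkQ_surjective _)
  obtain ⟨g, hg⟩ := Module.projective_lifting_property (bbar ∘ₗ (twoSMul N).mkQ) (twoSMul L).mkQ
    (hsurj.comp (Submodule.mkQ_surjective _))
  have hA' : ∀ m, (twoSMul N).mkQ (A m) = abar ((twoSMul M).mkQ m) := LinearMap.congr_fun hA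
  have hg' : ∀ l, bbar ((twoSMul N).mkQ (g l)) = (twoSMul L).mkQ l := LinearMap.congr_fun hg
  have hba : ∀ m, bbar (abar m) = 0 := fun m =>
    LinearMap.mem_ker.1 (hex ▸ LinearMap.mem_range_self abar m)
  have mk0 : ∀ n : N, (twoSMul N).mkQ n = 0 ↔ n ∈ twoSMul N := fun n =>
    Submodule.Quotient.mk_eq_zero _
  have mk0L : ∀ n : L, (twoSMul L).mkQ n = 0 ↔ n ∈ twoSMul L := fun n =>
    Submodule.Quotient.mk_eq_zero _
  have mk0M : ∀ n : M, (twoSMul M).mkQ n = 0 ↔ n ∈ twoSMul M := fun n =>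
    Submodule.Quotient.mk_eq_zero _
  obtain ⟨e, he⟩ := lift_equiv_aux (LinearMap.coprod A g) (by
    rintro ⟨m, l⟩ h
    rw [← mk0, LinearMap.coprod_apply, map_add, hA'] at h
    have hl := congrArg bbar h
    rw [map_add, hba, hg', zero_add, map_zero, mk0L] at hl
    obtain ⟨l', rfl⟩ := mem_twoSMul'.1 hl
    have : (twoSMul N).mkQ (g ((2 : ℤ) • l')) = 0 :=
      (mk0 _).2 (mem_twoSMul'.2 ⟨g l', map_smul _ _ _⟩)
    rw [this, add_zero] at h
    have hm := hinj (h.trans (map_zero abar).symm)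
    rw [mk0M] at hm
    obtain ⟨m', rfl⟩ := mem_twoSMul'.1 hm
    exact mem_twoSMul'.2 ⟨(m', l'), rfl⟩) (by
    intro n
    obtain ⟨l, hl⟩ := Submodule.mkQ_surjective _ (bbar ((twoSMul N).mkQ n))
    have : (twoSMul N).mkQ (n - g l) ∈ LinearMap.range abar := by
      rw [hex, LinearMap.mem_ker, map_sub, map_sub, hg', hl, sub_self]
    obtain ⟨mb, hm⟩ := this
    obtain ⟨m, rfl⟩ := Submodule.mkQ_surjective _ mb
    refine ⟨(m, l), ?_⟩
    rw [← mk0, LinearMap.coprod_apply, map_sub, map_add, hA', hm, map_sub]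
    abel)
  have he' : ∀ m l, (twoSMul N).mkQ (e (m, l)) = abar ((twoSMul M).mkQ m) + (twoSMul N).mkQ (g l) := by
    intro m l
    have := (mk0 _).2 (he (m, l))
    rw [map_sub, sub_eq_zero] at this
    rw [this, LinearMap.coprod_apply, map_add, hA']
  refine ⟨e.toLinearMap ∘ₗ LinearMap.inl ℤ M L, LinearMap.snd ℤ M L ∘ₗ e.symm.toLinearMap,
    ?_, ?_, ?_, ?_, ?_, ?_, ?_⟩
  · intro x hx
    obtain ⟨y, rfl⟩ := mem_twoSMul'.1 hx
    exact mem_twoSMul'.2 ⟨_, map_smul _ _ _⟩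
  · intro x hx
    obtain ⟨y, rfl⟩ := mem_twoSMul'.1 hx
    exact mem_twoSMul'.2 ⟨_, map_smul _ _ _⟩
  · refine LinearMap.ext fun x => ?_
    obtain ⟨m, rfl⟩ := Submodule.mkQ_surjective _ x
    have := he' m 0
    rw [map_zero, map_zero, add_zero] at this
    exact this
  · refine LinearMap.ext fun x => ?_
    obtain ⟨n, rfl⟩ := Submodule.mkQ_surjective _ x
    obtain ⟨⟨m, l⟩, rfl⟩ := e.surjective n
    have h3 : bbar ((twoSMul N).mkQ (e (m, l))) = (twoSMul L).mkQ l := by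
      rw [he', map_add, hba, hg', zero_add]
    refine Eq.trans ?_ h3.symm
    change (twoSMul L).mkQ (e.symm (e (m, l))).2 = _
    rw [LinearEquiv.symm_apply_apply]
  · exact e.injective.comp LinearMap.inl_injective
  · exact Prod.snd_surjective.comp e.symm.surjective
  · ext n
    obtain ⟨⟨m, l⟩, rfl⟩ := e.surjective n
    simp [eq_comm]
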